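/- Let I ⊆ N = {1,…,n} and let h : 𝖱 → 𝖱^n be continuous such that π_i∘h is unbounded for each i ∈ I and bounded for each i ∉ I, where π_i is the i-th coordinate projection. If U ⊆ 𝖱^n is an open set containing the image of h, then there exist x ∈ 𝖱 and, for each j ∈ N∖I, elements y_j < y_j' of 𝖱, such that U contains the product ∏_{i=1}^n U_i, where U_i = [x, ω₁) for i ∈ I and U_j = (y_j, y_j') for j ∉ I. -/

import Mathlib

noncomputable section
open Set

/-- The first uncountable ordinal `ω₁`. -/
def Omega1 : Ordinal := Ordinal.omega 1

/-- The closed long ray `𝖱`: `ω₁ × [0,1)` with the lexicographic order. -/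
def LongRay : Type 1 := {o : Ordinal // o < Omega1} ×ₗ (Set.Ico (0:ℝ) 1)

instance : LinearOrder LongRay :=
  inferInstanceAs (LinearOrder ({o : Ordinal // o < Omega1} ×ₗ (Set.Ico (0:ℝ) 1)))

/-- `𝖱` carries the order topology. -/
instance : TopologicalSpace LongRay := Preorder.topology LongRay
instance : OrderTopology LongRay := ⟨rfl⟩

lemma omega1_pos : (0 : Ordinal) < Omega1 := Ordinal.omega_pos 1

/-- The point `0 = (0,0)` of the long ray. -/
def rayZero : LongRay := toLex (⟨0, omega1_pos⟩, ⟨0, by simp⟩)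

/-- Identification of the countable ordinal `o` with the point `(o,0)` of the long ray
(junk value for `o ≥ ω₁`). -/
def ordR (o : Ordinal) : LongRay :=
  if h : o < Omega1 then toLex (⟨o, h⟩, ⟨0, by simp⟩) else rayZero

/-- The `I`-diagonal at height `c` (only the values of `c` off `I` are relevant). -/
def Delta (n : ℕ) (I : Finset (Fin n)) (c : Fin n → LongRay) : Set (Fin n → LongRay) :=
  {x | (∀ i ∈ I, ∀ i' ∈ I, x i = x i') ∧ ∀ j ∉ I, x j = c j}

/-- `f` is `I`-cofinal if `f` restricted to `Δ_I = Δ_I(0)` is unbounded. -/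
def ICofinal (n : ℕ) (f : (Fin n → LongRay) → LongRay) (I : Finset (Fin n)) : Prop :=
  ¬ BddAbove (f '' Delta n I (fun _ => rayZero))

/-- The cofinality class `𝔠(f) = {I : f is I-cofinal}`. -/
def cofClass (n : ℕ) (f : (Fin n → LongRay) → LongRay) : Set (Finset (Fin n)) :=
  {I | ICofinal n f I}

/-- `M_I(c) = {x : x_i ≥ c for all i ∈ I}`. -/
def MSet (n : ℕ) (I : Finset (Fin n)) (c : LongRay) : Set (Fin n → LongRay) :=
  {x | ∀ i ∈ I, c ≤ x i}

/-- `E_I(b,d) = {x ∈ M_I(d) : x_j = b_j for all j ∉ I}`. -/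
def ESet (n : ℕ) (I : Finset (Fin n)) (b : Fin n → LongRay) (d : LongRay) :
    Set (Fin n → LongRay) :=
  {x | (∀ i ∈ I, d ≤ x i) ∧ ∀ j ∉ I, x j = b j}

/-!
Closed unbounded subsets of the long ray behave as in `ω₁`: countable intersections of them are
unbounded, and there is a pressing-down lemma. An unbounded coordinate of the curve fixes a closed
unbounded set of points. A bounded one has a cluster point, because closed initial segments are
Lindelöf; since disjoint closed sets are never both unbounded, it converges to that point, and then
it is eventually constant. So on a closed unbounded set of times `t` the curve passes through the
point with coordinates `t` on `I` and constants `c j` off `I`. Pressing down on the size of a box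
around that point contained in `U` gives one `a` and one neighbourhood `V` of `c` such that the
boxes `(a, t]^I × V` lie in `U` for unboundedly many `t`; their union is `(a, ω₁)^I × V`.
-/

open Filter Topology

lemma eventually_eq_of_tendsto {α Y : Type*} {l : Filter α} [CountableInterFilter l]
    [TopologicalSpace Y] [T1Space Y] [FirstCountableTopology Y] {f : α → Y} {c : Y}
    (hf : Tendsto f l (𝓝 c)) : ∀ᶠ x in l, f x = c := by
  obtain ⟨T, hTopen, hT, hcT⟩ := IsGδ.singleton c
  have hev : ∀ᶠ x in l, ∀ V ∈ T, f x ∈ V := (eventually_countable_ball hT).2 fun V hV =>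
    hf ((hTopen V hV).mem_nhds (mem_sInter.1 (hcT ▸ mem_singleton c) V hV))
  filter_upwards [hev] with x hx
  exact mem_singleton_iff.1 (hcT ▸ mem_sInter.2 hx)

lemma tendsto_of_mem_Icc_succ {X : Type*} [LinearOrder X] [TopologicalSpace X] [OrderTopology X]
    {x w : ℕ → X} {t : X} (hx : Tendsto x atTop (𝓝 t))
    (hw : ∀ m, w m ∈ Icc (x m) (x (m + 1))) : Tendsto w atTop (𝓝 t) :=
  tendsto_of_tendsto_of_tendsto_of_le_of_le hx ((tendsto_add_atTop_iff_nat 1).2 hx)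
    (fun m => (hw m).1) fun m => (hw m).2

lemma exists_Ioc_pi_subset_of_mem_nhds {ι X : Type*} [LinearOrder X] [TopologicalSpace X]
    [OrderTopology X] {t : X} {N : Set (ι → X)} (hN : N ∈ 𝓝 fun _ => t) (ht : ∃ l, l < t) :
    ∃ a < t, ∀ z : ι → X, (∀ i, z i ∈ Ioc a t) → z ∈ N := by
  rw [nhds_pi, Filter.mem_pi] at hN
  obtain ⟨F, hF, s, hs, hsN⟩ := hN
  obtain ⟨a, hat, ha⟩ := exists_Ioc_subset_of_mem_nhds ((biInter_mem hF).2 fun i _ => hs i) ht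
  exact ⟨a, hat, fun z hz => hsN fun i hi => mem_iInter₂.1 (ha (hz i)) i hi⟩

lemma firstCountableTopology_of_Iic {X : Type*} [LinearOrder X] [NoMaxOrder X]
    [TopologicalSpace X] [OrderTopology X] [∀ b : X, FirstCountableTopology (Iic b)] :
    FirstCountableTopology X where
  nhds_generated_countable c := by
    obtain ⟨b, hcb⟩ := exists_gt c
    rw [← map_nhds_subtype_coe_eq_nhds (p := (· ∈ Iic b)) hcb.le (Iic_mem_nhds hcb)]
    infer_instance

lemma exists_Ico_pi_subset_of_mem_nhds {ι X : Type*} [LinearOrder X] [NoMaxOrder X]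
    [TopologicalSpace X] [OrderTopology X] {c : ι → X} {V : Set (ι → X)} (hV : V ∈ 𝓝 c) :
    ∃ u : ι → X, (∀ j, c j < u j) ∧ ∀ y : ι → X, (∀ j, y j ∈ Ico (c j) (u j)) → y ∈ V := by
  rw [nhds_pi, Filter.mem_pi] at hV
  obtain ⟨F, -, s, hs, hsV⟩ := hV
  choose u hcu hu using fun j => exists_Ico_subset_of_mem_nhds (hs j) (exists_gt (c j))
  exact ⟨u, hcu, fun y hy => hsV fun j _ => hu j (hy j)⟩

lemma continuous_piecewise_prod {ι X : Type*} [TopologicalSpace X] (I : Set ι)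
    [∀ i, Decidable (i ∈ I)] :
    Continuous fun p : (ι → X) × (ι → X) => I.piecewise p.1 p.2 := by
  refine continuous_pi fun i => ?_
  by_cases hi : i ∈ I <;> simp only [hi, piecewise_eq_of_mem, piecewise_eq_of_notMem,
    not_false_eq_true] <;> fun_prop

/-- A σ-complete order: every nonempty countable subset has a least upper bound. In the absence of a
maximum this makes the cofinality uncountable, and it is the form in which completeness is shared by
`ω₁` and the long ray. -/
class SigmaCompleteOrder (X : Type*) [Preorder X] : Prop where
  exists_isLUB_of_countable : ∀ S : Set X, S.Countable → S.Nonempty → ∃ t, IsLUB S t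

section SigmaComplete

variable {X : Type*} [LinearOrder X] [SigmaCompleteOrder X]

lemma bddAbove_of_countable [Nonempty X] {S : Set X} (hS : S.Countable) : BddAbove S := by
  rcases S.eq_empty_or_nonempty with rfl | hne
  · exact bddAbove_empty
  · obtain ⟨t, ht⟩ := SigmaCompleteOrder.exists_isLUB_of_countable S hS hne
    exact ⟨t, ht.1⟩

instance : CountableInterFilter (atTop : Filter X) where
  countable_sInter_mem 𝒮 h𝒮 hmem := by
    cases isEmpty_or_nonempty X
    · exact mem_of_superset univ_mem fun x => isEmptyElim x
    choose! a ha using fun s hs => mem_atTop_sets.1 (hmem s hs)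
    obtain ⟨b, hb⟩ := bddAbove_of_countable (h𝒮.image a)
    exact mem_atTop_sets.2 ⟨b, fun t ht s hs => ha s hs t ((hb (mem_image_of_mem a hs)).trans ht)⟩

variable [TopologicalSpace X] [OrderTopology X]

lemma bddAbove_range_of_separableSpace [Nonempty X] {Z : Type*} [TopologicalSpace Z]
    [TopologicalSpace.SeparableSpace Z] {f : Z → X} (hf : Continuous f) : BddAbove (range f) := by
  obtain ⟨D, hD, hDdense⟩ := TopologicalSpace.exists_countable_dense Z
  exact (bddAbove_closure.2 (bddAbove_of_countable (hD.image f))).mono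
    (hf.range_subset_closure_image_dense hDdense)

lemma exists_monotone_seq_tendsto {R : X → X → Prop} (hR : ∀ a, ∀ᶠ b in atTop, R a b) (b : X) :
    ∃ (x : ℕ → X) (t : X), b ≤ t ∧ Monotone x ∧ Tendsto x atTop (𝓝 t) ∧
      ∀ m, R (x m) (x (m + 1)) := by
  have : Nonempty X := ⟨b⟩
  choose g hRg hg using fun a => ((hR a).and (eventually_ge_atTop a)).exists
  let x : ℕ → X := fun m => g^[m] b
  have hx (m : ℕ) : x (m + 1) = g (x m) := Function.iterate_succ_apply' g m b
  have hmono : Monotone x := monotone_nat_of_le_succ fun m => hx m ▸ hg (x m)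
  obtain ⟨t, ht⟩ := SigmaCompleteOrder.exists_isLUB_of_countable (range x) (countable_range x)
    (range_nonempty x)
  exact ⟨x, t, ht.1 ⟨0, rfl⟩, hmono, tendsto_atTop_isLUB hmono ht, fun m => hx m ▸ hRg (x m)⟩

lemma frequently_mem_iInter_of_isClosed [Nonempty X] {κ : Type*} [Countable κ] {C : κ → Set X}
    (hC : ∀ k, IsClosed (C k)) (hCtop : ∀ k, ∃ᶠ t in atTop, t ∈ C k) :
    ∃ᶠ t in atTop, t ∈ ⋂ k, C k := by
  have hR (a : X) : ∀ᶠ b in atTop, ∀ k, ∃ s ∈ C k, s ∈ Icc a b := by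
    refine eventually_countable_forall.2 fun k => ?_
    obtain ⟨s, has, hs⟩ := frequently_atTop.1 (hCtop k) a
    filter_upwards [eventually_ge_atTop s] with b hsb using ⟨s, hs, has, hsb⟩
  refine frequently_atTop.2 fun b => ?_
  obtain ⟨x, t, hbt, -, hxt, hx⟩ := exists_monotone_seq_tendsto hR b
  refine ⟨t, hbt, mem_iInter.2 fun k => ?_⟩
  choose w hwC hw using fun m => hx m k
  exact (hC k).mem_of_tendsto (tendsto_of_mem_Icc_succ hxt hw) (Eventually.of_forall hwC)

/-- The monotonicity of `P` makes up for the failure of the usual pressing-down lemma on the long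
ray, where the predecessors of a point are uncountable: it is enough to test `P` along a sequence
increasing to `t`. -/
lemma exists_frequently_of_regressive {κ : Type*} [Countable κ] {P : X → κ → X → Prop}
    (hP : ∀ k t, Monotone fun a => P a k t) {C : Set X} (hC : IsClosed C)
    (hCtop : ∃ᶠ t in atTop, t ∈ C) (hCP : ∀ᶠ t in atTop, t ∈ C → ∃ a < t, ∃ k, P a k t) :
    ∃ a k, ∃ᶠ t in atTop, P a k t := by
  by_contra! hcon
  have : Nonempty X := hCtop.exists.nonempty
  have hR (a : X) : ∀ᶠ b in atTop, (∃ s ∈ C, s ∈ Icc a b) ∧ ∀ k, ∀ t ≥ b, ¬ P a k t := by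
    obtain ⟨s, has, hs⟩ := frequently_atTop.1 hCtop a
    filter_upwards [eventually_ge_atTop s, eventually_countable_forall.2 fun k =>
      eventually_forall_ge_atTop.2 (hcon a k)] with b hsb hb using ⟨⟨s, hs, has, hsb⟩, hb⟩
  obtain ⟨b, hb⟩ := eventually_atTop.1 hCP
  obtain ⟨x, t, hbt, hmono, hxt, hx⟩ := exists_monotone_seq_tendsto hR b
  choose w hwC hw using fun m => (hx m).1
  have htC : t ∈ C := hC.mem_of_tendsto (tendsto_of_mem_Icc_succ hxt hw) (Eventually.of_forall hwC)
  obtain ⟨a, hat, k, hPt⟩ := hb t hbt htC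
  obtain ⟨m, ham⟩ := (hxt.eventually_const_lt hat).exists
  exact (hx m).2 k t (hmono.ge_of_tendsto hxt (m + 1)) (hP k t ham.le hPt)

lemma frequently_eq_self_of_not_bddAbove [Nonempty X]
    [∀ b : X, TopologicalSpace.SeparableSpace (Iic b)] {f : X → X} (hf : Continuous f)
    (hunb : ¬ BddAbove (range f)) : ∃ᶠ t in atTop, f t = t := by
  have hR (a : X) : ∀ᶠ b in atTop, ∃ s ∈ Icc a b, f s ∈ Icc a b := by
    obtain ⟨β, hβ⟩ :=
      bddAbove_range_of_separableSpace (hf.comp (continuous_subtype_val (p := (· ∈ Iic a))))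
    obtain ⟨_, ⟨s, rfl⟩, hs⟩ := not_bddAbove_iff.1 hunb (max a β)
    obtain ⟨haf, hβs⟩ := max_lt_iff.1 hs
    have has : a ≤ s := by
      by_contra! hsa
      exact hβs.not_ge (hβ ⟨⟨s, hsa.le⟩, rfl⟩)
    filter_upwards [eventually_ge_atTop s, eventually_ge_atTop (f s)] with b hsb hfb
      using ⟨s, ⟨has, hsb⟩, haf.le, hfb⟩
  refine frequently_atTop.2 fun b => ?_
  obtain ⟨x, t, hbt, -, hxt, hx⟩ := exists_monotone_seq_tendsto hR b
  choose s hs hfs using hx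
  exact ⟨t, hbt, tendsto_nhds_unique ((hf.tendsto t).comp (tendsto_of_mem_Icc_succ hxt hs))
    (tendsto_of_mem_Icc_succ hxt hfs)⟩

lemma tendsto_of_mapClusterPt [Nonempty X] {Y : Type*} [TopologicalSpace Y] [RegularSpace Y]
    {f : X → Y} (hf : Continuous f) {c : Y} (hc : MapClusterPt c atTop f) :
    Tendsto f atTop (𝓝 c) := by
  intro N hN
  obtain ⟨M, hM, hMclosed, hMN⟩ := exists_mem_nhds_isClosed_subset (interior_mem_nhds.2 hN)
  by_contra hfN
  have hfar : ∃ᶠ t in atTop, f t ∈ (interior N)ᶜ :=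
    (not_eventually.1 hfN).mono fun t ht htN => ht (interior_subset htN)
  obtain ⟨t, ht⟩ := (frequently_mem_iInter_of_isClosed
    (C := fun b : Bool => f ⁻¹' cond b M (interior N)ᶜ)
    (Bool.forall_bool.2 ⟨isOpen_interior.isClosed_compl.preimage hf, hMclosed.preimage hf⟩)
    (Bool.forall_bool.2 ⟨hfar, hc.frequently hM⟩)).exists
  exact mem_iInter.1 ht false (hMN (mem_iInter.1 ht true))

lemma exists_eventually_eq_of_continuous [Nonempty X] {Y : Type*} [TopologicalSpace Y]
    [LindelofSpace Y] [T3Space Y] [FirstCountableTopology Y] {f : X → Y} (hf : Continuous f) :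
    ∃ c, ∀ᶠ t in atTop, f t = c := by
  obtain ⟨c, -, hc⟩ := LindelofSpace.isLindelof_univ (X := Y) (f := map f atTop) (by simp)
  exact ⟨c, eventually_eq_of_tendsto (tendsto_of_mapClusterPt hf hc)⟩

lemma exists_eventually_eq_of_bddAbove [Nonempty X] [∀ b : X, LindelofSpace (Iic b)]
    [∀ b : X, FirstCountableTopology (Iic b)] {f : X → X} (hf : Continuous f)
    (hbdd : BddAbove (range f)) : ∃ c, ∀ᶠ t in atTop, f t = c := by
  obtain ⟨b, hb⟩ := hbdd
  obtain ⟨c, hc⟩ := exists_eventually_eq_of_continuous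
    (hf.codRestrict (s := Iic b) fun t => hb ⟨t, rfl⟩)
  exact ⟨c, hc.mono fun t ht => congrArg Subtype.val ht⟩

lemma exists_forall_eventually_mem_of_nhds_diagonal [NoMaxOrder X] {ι Y : Type*} [Countable ι]
    {L : Filter Y} [L.IsCountablyGenerated] {C : Set X} (hC : IsClosed C)
    (hCtop : ∃ᶠ t in atTop, t ∈ C) {W : Set ((ι → X) × Y)}
    (hW : ∀ᶠ t in atTop, t ∈ C → W ∈ (𝓝 fun _ => t) ×ˢ L) :
    ∃ a, ∀ᶠ y in L, ∀ z : ι → X, (∀ i, a < z i) → (z, y) ∈ W := by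
  obtain ⟨x₀, -⟩ := hCtop.exists
  obtain ⟨B, hB⟩ := L.exists_antitone_basis
  let P (a : X) (k : ℕ) (t : X) : Prop :=
    ∀ y ∈ B k, ∀ z : ι → X, (∀ i, z i ∈ Ioc a t) → (z, y) ∈ W
  have hP (k : ℕ) (t : X) : Monotone fun a => P a k t := fun a a' haa' ha y hy z hz =>
    ha y hy z fun i => Ioc_subset_Ioc_left haa' (hz i)
  have hPC : ∀ᶠ t in atTop, t ∈ C → ∃ a < t, ∃ k, P a k t := by
    filter_upwards [hW, eventually_gt_atTop x₀] with t hWt hx₀t htC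
    obtain ⟨N, hN, V, hV, hNV⟩ := mem_prod_iff.1 (hWt htC)
    obtain ⟨a, hat, ha⟩ := exists_Ioc_pi_subset_of_mem_nhds hN ⟨x₀, hx₀t⟩
    obtain ⟨k, hk⟩ := hB.mem_iff.1 hV
    exact ⟨a, hat, k, fun y hy z hz => hNV ⟨ha z hz, hk hy⟩⟩
  obtain ⟨a, k, hak⟩ := exists_frequently_of_regressive hP hC hCtop hPC
  refine ⟨a, mem_of_superset (hB.mem k) fun y hy z hz => ?_⟩
  obtain ⟨t, hPt, ht⟩ :=
    (hak.and_eventually (eventually_countable_forall.2 fun i => eventually_ge_atTop (z i))).exists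
  exact hPt y hy z fun i => ⟨hz i, ht i⟩

section Curve

variable [Nonempty X] [NoMaxOrder X] [∀ b : X, SecondCountableTopology (Iic b)] {ι : Type*}
  [Countable ι] {I : Set ι} {h : X → ι → X} {U : Set (ι → X)}

lemma exists_eventually_piecewise_mem [∀ i, Decidable (i ∈ I)] (hcont : Continuous h)
    (hcof : ∀ i ∈ I, ¬ BddAbove (range fun t => h t i))
    (hbd : ∀ i ∉ I, BddAbove (range fun t => h t i)) (hU : IsOpen U) (him : range h ⊆ U) :
    ∃ (a : X) (c : ι → X), ∀ᶠ y in 𝓝 c, ∀ z : ι → X, (∀ i, a < z i) → I.piecewise z y ∈ U := by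
  have := firstCountableTopology_of_Iic (X := X)
  have hcoord (i : ι) : Continuous fun t => h t i := (continuous_apply i).comp hcont
  choose! c hc using fun j hj => exists_eventually_eq_of_bddAbove (hcoord j) (hbd j hj)
  have hconst : ∀ᶠ t in atTop, ∀ j, j ∉ I → h t j = c j :=
    eventually_countable_forall.2 fun j => eventually_imp_distrib_left.2 (hc j)
  have hclosed (i : I) : IsClosed {t | h t i = t} := isClosed_eq (hcoord i) continuous_id
  have hfix : ∃ᶠ t in atTop, t ∈ ⋂ i : I, {t | h t i = t} :=
    frequently_mem_iInter_of_isClosed hclosed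
      fun i => frequently_eq_self_of_not_bddAbove (hcoord i) (hcof i i.2)
  suffices hW : ∀ᶠ t in atTop, t ∈ ⋂ i : I, {t | h t i = t} →
      {p : (ι → X) × (ι → X) | I.piecewise p.1 p.2 ∈ U} ∈ (𝓝 fun _ => t) ×ˢ 𝓝 c by
    obtain ⟨a, ha⟩ :=
      exists_forall_eventually_mem_of_nhds_diagonal (isClosed_iInter hclosed) hfix hW
    exact ⟨a, c, ha⟩
  filter_upwards [hconst] with t htc htI
  have hht : I.piecewise (fun _ => t) c = h t := by
    ext i
    by_cases hi : i ∈ I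
    · rw [piecewise_eq_of_mem _ _ _ hi]
      exact (mem_iInter.1 htI ⟨i, hi⟩).symm
    · rw [piecewise_eq_of_notMem _ _ _ hi, htc i hi]
  rw [← nhds_prod_eq]
  refine (hU.preimage (continuous_piecewise_prod I)).mem_nhds ?_
  exact mem_preimage.2 (hht ▸ him ⟨t, rfl⟩)

theorem structure_of_open_sets_general (hcont : Continuous h)
    (hcof : ∀ i ∈ I, ¬ BddAbove (range fun t => h t i))
    (hbd : ∀ i ∉ I, BddAbove (range fun t => h t i)) (hU : IsOpen U) (him : range h ⊆ U) :
    ∃ x : X, ∃ y y' : ι → X, (∀ j ∉ I, y j < y' j) ∧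
      {z : ι → X | (∀ i ∈ I, x ≤ z i) ∧ ∀ j ∉ I, z j ∈ Ioo (y j) (y' j)} ⊆ U := by
  classical
  obtain ⟨a, c, hac⟩ := exists_eventually_piecewise_mem hcont hcof hbd hU him
  obtain ⟨u, hcu, hu⟩ := exists_Ico_pi_subset_of_mem_nhds hac
  obtain ⟨x, hax⟩ := exists_gt a
  refine ⟨x, c, u, fun j _ => hcu j, fun z ⟨hzI, hz⟩ => ?_⟩
  have hy (j : ι) : I.piecewise c z j ∈ Ico (c j) (u j) := by
    by_cases hj : j ∈ I
    · simpa [hj] using hcu j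
    · simpa [hj] using Ioo_subset_Ico_self (hz j hj)
  have hz' (i : ι) : a < I.piecewise z (fun _ => x) i := by
    by_cases hi : i ∈ I
    · simpa [hi] using hax.trans_le (hzI i hi)
    · simpa [hi] using hax
  have hpiecewise : I.piecewise (I.piecewise z fun _ => x) (I.piecewise c z) = z := by
    ext i
    by_cases hi : i ∈ I <;> simp [hi]
  exact hpiecewise ▸ hu _ hy _ hz'

end Curve

end SigmaComplete

section Lex

variable {α β : Type*} [LinearOrder α]

lemma exists_isLUB_lex [WellFoundedLT α] [ConditionallyCompleteLinearOrder β] [OrderBot β]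
    {S : Set (α ×ₗ β)} (hS : BddAbove S) : ∃ t, IsLUB S t := by
  obtain ⟨b, hb⟩ := hS
  obtain ⟨τ, ⟨r₀, hr₀⟩, hτ⟩ := WellFounded.has_min wellFounded_lt
    {τ | ∃ r, toLex (τ, r) ∈ upperBounds S} ⟨(ofLex b).1, (ofLex b).2, hb⟩
  let R : Set β := {r | toLex (τ, r) ∈ upperBounds S}
  refine ⟨toLex (τ, sInf R), fun s hs => Prod.Lex.le_iff.2 ?_, fun u hu => Prod.Lex.le_iff.2 ?_⟩
  · rcases Prod.Lex.le_iff.1 (hr₀ hs) with hlt | ⟨heq, -⟩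
    · exact Or.inl hlt
    · refine Or.inr ⟨heq, le_csInf ⟨r₀, hr₀⟩ fun r hr => ?_⟩
      exact (Prod.Lex.le_iff.1 (hr hs)).elim (fun hlt => absurd heq hlt.ne) And.right
  · rcases (not_lt.1 (hτ (ofLex u).1 ⟨(ofLex u).2, hu⟩)).lt_or_eq with hlt | heq
    · exact Or.inl hlt
    · refine Or.inr ⟨heq, csInf_le (OrderBot.bddBelow R) ?_⟩
      change toLex (τ, (ofLex u).2) ∈ upperBounds S
      rwa [show τ = (ofLex u).1 from heq]

lemma exists_mem_between_lex [LinearOrder β] [NoMaxOrder β] {D : Set β}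
    (hD : ∀ r s : β, r < s → ∃ d ∈ D, r < d ∧ d < s) {p q : α ×ₗ β} (hpq : p < q) :
    ∃ d ∈ D, p < toLex ((ofLex p).1, d) ∧ toLex ((ofLex p).1, d) < q := by
  rcases Prod.Lex.lt_iff.1 hpq with hlt | ⟨heq, hlt⟩
  · obtain ⟨s, hs⟩ := exists_gt (ofLex p).2
    obtain ⟨d, hdD, hpd, -⟩ := hD _ s hs
    exact ⟨d, hdD, Prod.Lex.lt_iff.2 (Or.inr ⟨rfl, hpd⟩), Prod.Lex.lt_iff.2 (Or.inl hlt)⟩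
  · obtain ⟨d, hdD, hpd, hdq⟩ := hD _ _ hlt
    exact ⟨d, hdD, Prod.Lex.lt_iff.2 (Or.inr ⟨rfl, hpd⟩), Prod.Lex.lt_iff.2 (Or.inr ⟨heq, hdq⟩)⟩

lemma secondCountableTopology_of_forall_exists_between {X : Type*} [LinearOrder X]
    [TopologicalSpace X] [OrderTopology X] {D : Set X} (hD : D.Countable)
    (hbetween : ∀ p q : X, p < q → ∃ d ∈ D, p < d ∧ d < q) : SecondCountableTopology X := by
  cases subsingleton_or_nontrivial X
  · infer_instance
  have : DenselyOrdered X := ⟨fun p q hpq => (hbetween p q hpq).imp fun _ hd => hd.2⟩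
  have : TopologicalSpace.SeparableSpace X :=
    ⟨D, hD, dense_of_exists_between fun p q hpq => hbetween p q hpq⟩
  exact SecondCountableTopology.of_separableSpace_orderTopology X

lemma secondCountableTopology_Iic_lex [LinearOrder β] [NoMaxOrder β] [DenselyOrdered β]
    [TopologicalSpace β] [OrderTopology β] [TopologicalSpace.SeparableSpace β]
    [TopologicalSpace (α ×ₗ β)] [OrderTopology (α ×ₗ β)] {b : α ×ₗ β}
    (hb : (Iic (ofLex b).1).Countable) : SecondCountableTopology (Iic b) := by
  obtain ⟨D, hD, hDdense⟩ := TopologicalSpace.exists_countable_dense β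
  have hE : ((fun p : α × β => toLex p) '' (Iic (ofLex b).1 ×ˢ D)).Countable :=
    (hb.prod hD).image _
  refine secondCountableTopology_of_forall_exists_between
    (hE.preimage Subtype.val_injective) fun p q hpq => ?_
  obtain ⟨d, hdD, hpd, hdq⟩ :=
    exists_mem_between_lex (fun r s hrs => hDdense.exists_between hrs) (show p.1 < q.1 from hpq)
  have hpb : (ofLex p.1).1 ≤ (ofLex b).1 := Prod.Lex.monotone_fst _ _ p.2
  exact ⟨⟨_, hdq.le.trans q.2⟩, ⟨((ofLex p.1).1, d), ⟨hpb, hdD⟩, rfl⟩, hpd, hdq⟩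

end Lex

lemma exists_forall_lt_of_countable_lt_omega_one {S : Set {o : Ordinal // o < Omega1}}
    (hS : S.Countable) : ∃ α, ∀ s ∈ S, s < α := by
  have := hS.to_subtype
  have hlim : Order.IsSuccLimit Omega1 := Cardinal.isSuccLimit_omega 1
  have hsup : ⨆ s : S, Order.succ s.1.1 < Omega1 :=
    Ordinal.iSup_lt_omega_one fun s => hlim.succ_lt s.1.2
  refine ⟨⟨_, hsup⟩, fun s hs => Subtype.coe_lt_coe.1 ?_⟩
  exact (Order.lt_succ s.1).trans_le (Ordinal.le_iSup (fun s : S => Order.succ s.1.1) ⟨s, hs⟩)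

lemma countable_Iic_lt_omega_one (α : {o : Ordinal // o < Omega1}) : (Iic α).Countable := by
  have hcard : (Order.succ α.1).card < Cardinal.aleph 1 := by
    rw [← Cardinal.lt_ord, Cardinal.ord_aleph]
    exact (Cardinal.isSuccLimit_omega 1).succ_lt α.2
  have hIio : (Iio (Order.succ α.1)).Countable := by
    rw [← Cardinal.le_aleph0_iff_set_countable, Cardinal.mk_Iio_ordinal,
      Cardinal.lift_le_aleph0, ← Order.lt_succ_iff, Cardinal.succ_aleph0]
    exact hcard
  refine (hIio.preimage Subtype.val_injective).mono fun β hβ => ?_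
  exact Order.lt_succ_iff.2 (show β.1 ≤ α.1 from hβ)

namespace LongRay

instance : Nonempty LongRay := ⟨rayZero⟩

instance : NoMaxOrder LongRay :=
  inferInstanceAs (NoMaxOrder ({o : Ordinal // o < Omega1} ×ₗ Ico (0 : ℝ) 1))

instance : SigmaCompleteOrder LongRay where
  exists_isLUB_of_countable S hS _ := by
    have : Inhabited (Ico (0 : ℝ) 1) := ⟨⊥⟩
    obtain ⟨α, hα⟩ := exists_forall_lt_of_countable_lt_omega_one (hS.image fun s => (ofLex s).1)
    refine exists_isLUB_lex (α := {o : Ordinal // o < Omega1}) (β := Ico (0 : ℝ) 1)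
      ⟨toLex (α, ⊥), fun s hs => ?_⟩
    exact Prod.Lex.le_iff.2 (Or.inl (hα _ (mem_image_of_mem _ hs)))

instance (b : LongRay) : SecondCountableTopology (Iic b) :=
  letI : TopologicalSpace ({o : Ordinal // o < Omega1} ×ₗ Ico (0 : ℝ) 1) :=
    inferInstanceAs (TopologicalSpace LongRay)
  haveI : OrderTopology ({o : Ordinal // o < Omega1} ×ₗ Ico (0 : ℝ) 1) :=
    inferInstanceAs (OrderTopology LongRay)
  secondCountableTopology_Iic_lex (α := {o : Ordinal // o < Omega1}) (β := Ico (0 : ℝ) 1)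
    (countable_Iic_lt_omega_one _)

end LongRay

/-- structure of open sets containing the image of a curve which is
cofinal exactly in the coordinates of `I`. -/
theorem structure_of_open_sets (n : ℕ) (I : Finset (Fin n)) (h : LongRay → (Fin n → LongRay))
    (hcont : Continuous h)
    (hcof : ∀ i ∈ I, ¬ BddAbove (Set.range (fun t => h t i)))
    (hbd : ∀ i ∉ I, BddAbove (Set.range (fun t => h t i)))
    (U : Set (Fin n → LongRay)) (hU : IsOpen U) (him : Set.range h ⊆ U) :
    ∃ x : LongRay, ∃ y y' : Fin n → LongRay, (∀ j ∉ I, y j < y' j) ∧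
      {z : Fin n → LongRay | (∀ i ∈ I, x ≤ z i) ∧ ∀ j ∉ I, z j ∈ Set.Ioo (y j) (y' j)} ⊆ U := by
  exact structure_of_open_sets_general (I := ↑I) hcont hcof hbd hU him
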